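/- Let n ≥ 3, let Γ ⊂ O(n) be a finite subgroup acting freely on ℝⁿ\{0}, and let u be a Γ-symmetric minimizer against Γ-symmetric competitors (with Q = 1) on ℝⁿ which is 1-homogeneous, harmonic in {u>0}, with Σ := ∂{u>0}\{0} a smooth embedded hypersurface, u smooth up to Σ from within {u>0} and |∇u| = 1 on Σ. If u is not a linear solution, then at every point of Σ one has 0 < ∂_ν(|∇u|²/2) = −∂²u/∂ν² = H, where ν is the unit normal along Σ pointing out of {u>0}; in particular the outward mean curvature H of Σ is strictly positive everywhere on Σ. -/

import Mathlib

open MeasureTheory Metric Set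
open scoped RealInnerProductSpace

noncomputable section

/-- The Alt–Caffarelli energy `E_Q(u, U) = ∫_U |∇u|² + Q²·1_{u>0}`. -/
def acEnergy {n : ℕ} (Q : ℝ) (u : EuclideanSpace ℝ (Fin n) → ℝ)
    (U : Set (EuclideanSpace ℝ (Fin n))) : ℝ :=
  ∫ x in U, (‖gradient u x‖ ^ 2 + Q ^ 2 * Set.indicator {y | 0 < u y} (fun _ => (1 : ℝ)) x)

/-- `u` is invariant under the group `Γ` of linear isometries. -/
def IsSymmetricUnder {n : ℕ}
    (Γ : Subgroup (EuclideanSpace ℝ (Fin n) ≃ₗᵢ[ℝ] EuclideanSpace ℝ (Fin n)))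
    (u : EuclideanSpace ℝ (Fin n) → ℝ) : Prop :=
  ∀ g ∈ Γ, ∀ x, u (g x) = u x

/-- A nonnegative locally Lipschitz `Γ`-symmetric function `u` is a `Γ`-symmetric minimizer
against `Γ`-symmetric competitors (with `Q = 1`). -/
def IsSymMinimizer {n : ℕ}
    (Γ : Subgroup (EuclideanSpace ℝ (Fin n) ≃ₗᵢ[ℝ] EuclideanSpace ℝ (Fin n)))
    (u : EuclideanSpace ℝ (Fin n) → ℝ) : Prop :=
  (∀ x, 0 ≤ u x) ∧ LocallyLipschitz u ∧ IsSymmetricUnder Γ u ∧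
    ∀ R > 0, ∀ v : EuclideanSpace ℝ (Fin n) → ℝ, (∀ x, 0 ≤ v x) → LocallyLipschitz v →
      IsSymmetricUnder Γ v →
      (∀ x ∉ ball (0 : EuclideanSpace ℝ (Fin n)) R, v x = u x) →
      acEnergy 1 u (ball 0 R) ≤ acEnergy 1 v (ball 0 R)

/-- The Euclidean Laplacian, as the trace of the Hessian. -/
def lap {n : ℕ} (f : EuclideanSpace ℝ (Fin n) → ℝ) (x : EuclideanSpace ℝ (Fin n)) : ℝ :=
  ∑ i : Fin n, fderiv ℝ (fun y => fderiv ℝ f y (EuclideanSpace.single i 1)) x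
    (EuclideanSpace.single i 1)

/-- The free boundary away from the origin: `Σ = ∂{u>0} \ {0}`. -/
def freeBoundary {n : ℕ} (u : EuclideanSpace ℝ (Fin n) → ℝ) :
    Set (EuclideanSpace ℝ (Fin n)) :=
  frontier {x | 0 < u x} \ {0}

/-- The outward unit normal along `Σ`, computed from a smooth extension `Uext` of `u`
across `Σ` (on `Σ` one has `u = 0`, `u > 0` inside, and `|∇Uext| = 1`, so `-∇Uext` is the
unit normal pointing out of `{u > 0}`). -/
def nuVec {n : ℕ} (Uext : EuclideanSpace ℝ (Fin n) → ℝ) (x : EuclideanSpace ℝ (Fin n)) :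
    EuclideanSpace ℝ (Fin n) :=
  -(gradient Uext x)

/-- The outward mean curvature `H = -∂²u/∂ν²` of `Σ`, computed from the smooth extension. -/
def meanCurv {n : ℕ} (Uext : EuclideanSpace ℝ (Fin n) → ℝ) (x : EuclideanSpace ℝ (Fin n)) : ℝ :=
  -(fderiv ℝ (fun y => (⟪gradient Uext y, nuVec Uext x⟫ : ℝ)) x (nuVec Uext x))

/-- One-sided directional derivative `∂_ν f(x)` in the outward normal direction,
taken from within `{u > 0}` (i.e. from the side `t ≤ 0`). -/
def dNu {n : ℕ} (Uext f : EuclideanSpace ℝ (Fin n) → ℝ) (x : EuclideanSpace ℝ (Fin n)) : ℝ :=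
  derivWithin (fun t : ℝ => f (x + t • nuVec Uext x)) (Set.Iic 0) 0

section helpers

variable {n : ℕ}

/-- second derivative test along a line -/
lemma second_deriv_nonpos {f : EuclideanSpace ℝ (Fin n) → ℝ} {p : EuclideanSpace ℝ (Fin n)}
    (hf : ContDiffAt ℝ 2 f p) (hmax : IsLocalMax f p) (v : EuclideanSpace ℝ (Fin n)) :
    fderiv ℝ (fun y => fderiv ℝ f y v) p v ≤ 0 := by
  have hline : ∀ t : ℝ, HasDerivAt (fun t : ℝ => p + t • v) v t := by
    intro t
    simpa using ((hasDerivAt_id t).smul_const v).const_add p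
  have hcont : ContinuousAt (fun t : ℝ => p + t • v) 0 := (hline 0).continuousAt
  have hp0 : p + (0 : ℝ) • v = p := by simp
  have htend : Filter.Tendsto (fun t : ℝ => p + t • v) (nhds 0) (nhds p) := by
    have := hcont.tendsto
    rwa [hp0] at this
  have hdiff : ∀ᶠ y in nhds p, DifferentiableAt ℝ f y := by
    have := hf.eventually (by simp)
    filter_upwards [this] with y hy
    exact hy.differentiableAt (by simp)
  have hd1 : deriv (fun t : ℝ => f (p + t • v)) =ᶠ[nhds 0] fun t => fderiv ℝ f (p + t • v) v := by
    filter_upwards [htend.eventually hdiff] with t ht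
    exact (ht.hasFDerivAt.comp_hasDerivAt t (hline t)).deriv
  have hD : DifferentiableAt ℝ (fun y => fderiv ℝ f y v) p := by
    have h1 : ContDiffAt ℝ 1 (fderiv ℝ f) p := hf.fderiv_right (by norm_num)
    exact (h1.differentiableAt (by simp)).clm_apply (differentiableAt_const v)
  have hd2 : deriv (deriv (fun t : ℝ => f (p + t • v))) 0
      = fderiv ℝ (fun y => fderiv ℝ f y v) p v := by
    rw [hd1.deriv_eq]
    have hD' : HasFDerivAt (fun y => fderiv ℝ f y v) (fderiv ℝ (fun y => fderiv ℝ f y v) p)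
        (p + (0 : ℝ) • v) := by rw [hp0]; exact hD.hasFDerivAt
    exact (hD'.comp_hasDerivAt (0 : ℝ) (hline 0)).deriv
  by_contra hcon
  push Not at hcon
  rw [← hd2] at hcon
  have hlm : IsLocalMax (fun t : ℝ => f (p + t • v)) 0 := by
    have := htend.eventually hmax
    filter_upwards [this] with t ht
    simpa using ht
  have hca : ContinuousAt (fun t : ℝ => f (p + t • v)) 0 := by
    have h2 : ContinuousAt f (p + (0 : ℝ) • v) := by rw [hp0]; exact hf.continuousAt
    exact ContinuousAt.comp (f := fun t : ℝ => p + t • v) h2 hcont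
  have hmin := isLocalMin_of_deriv_deriv_pos hcon hlm.deriv_eq_zero hca
  have hconst : (fun t : ℝ => f (p + t • v)) =ᶠ[nhds 0] fun _ => f p := by
    filter_upwards [hlm, hmin] with t h1 h2
    simp at h1 h2
    exact le_antisymm h1 h2
  have h3 : deriv (deriv (fun t : ℝ => f (p + t • v))) 0 = 0 := by
    rw [hconst.deriv.deriv_eq]
    simp
  linarith

lemma lap_nonpos_of_isLocalMax {f : EuclideanSpace ℝ (Fin n) → ℝ} {p : EuclideanSpace ℝ (Fin n)}
    (hf : ContDiffAt ℝ 2 f p) (hmax : IsLocalMax f p) : lap f p ≤ 0 :=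
  Finset.sum_nonpos fun _ _ => second_deriv_nonpos hf hmax _

lemma hasFDerivAt_fderiv_apply {f : EuclideanSpace ℝ (Fin n) → ℝ} {p : EuclideanSpace ℝ (Fin n)}
    (hf : ContDiffAt ℝ 2 f p) (v : EuclideanSpace ℝ (Fin n)) :
    DifferentiableAt ℝ (fun y => fderiv ℝ f y v) p := by
  have h1 : ContDiffAt ℝ 1 (fderiv ℝ f) p := hf.fderiv_right (by norm_num)
  exact (h1.differentiableAt (by simp)).clm_apply (differentiableAt_const v)

lemma lap_add_const_mul {f g : EuclideanSpace ℝ (Fin n) → ℝ} {p : EuclideanSpace ℝ (Fin n)}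
    (hf : ContDiffAt ℝ 2 f p) (hg : ContDiffAt ℝ 2 g p) (c : ℝ) :
    lap (fun y => f y + c * g y) p = lap f p + c * lap g p := by
  unfold lap
  rw [Finset.mul_sum, ← Finset.sum_add_distrib]
  refine Finset.sum_congr rfl fun i _ => ?_
  have he : (fun y => fderiv ℝ (fun y => f y + c * g y) y (EuclideanSpace.single i 1))
      =ᶠ[nhds p] fun y => fderiv ℝ f y (EuclideanSpace.single i 1)
        + c * fderiv ℝ g y (EuclideanSpace.single i 1) := by
    filter_upwards [hf.eventually (by simp), hg.eventually (by simp)] with y h1 h2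
    have h1' := h1.differentiableAt (by simp)
    have h2' := h2.differentiableAt (by simp)
    rw [(h1'.hasFDerivAt.fun_add (h2'.hasFDerivAt.const_mul c)).fderiv]
    simp
  rw [he.fderiv_eq]
  have h1 := hasFDerivAt_fderiv_apply hf (EuclideanSpace.single i 1)
  have h2 := hasFDerivAt_fderiv_apply hg (EuclideanSpace.single i 1)
  rw [(h1.hasFDerivAt.fun_add (h2.hasFDerivAt.const_mul c)).fderiv]
  simp

lemma hasFDerivAt_barrier (α : ℝ) (q y : EuclideanSpace ℝ (Fin n)) :
    HasFDerivAt (fun z => Real.exp (-α * ‖z - q‖ ^ 2))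
      ((Real.exp (-α * ‖y - q‖ ^ 2) * (-2 * α)) • innerSL ℝ (y - q)) y := by
  have h0 : HasFDerivAt (fun z => ‖z - q‖ ^ 2) (2 • (innerSL ℝ (y - q))) y := by
    have := ((hasFDerivAt_id y).sub_const q).norm_sq
    simpa using this
  have := (h0.const_mul (-α)).exp
  refine this.congr_fderiv ?_
  ext v
  simp
  ring

lemma lap_barrier (α : ℝ) (q y : EuclideanSpace ℝ (Fin n)) :
    lap (fun z => Real.exp (-α * ‖z - q‖ ^ 2)) y
      = Real.exp (-α * ‖y - q‖ ^ 2) * (4 * α ^ 2 * ‖y - q‖ ^ 2 - 2 * α * n) := by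
  unfold lap
  have h1 : ∀ i : Fin n, fderiv ℝ (fun y => fderiv ℝ (fun z => Real.exp (-α * ‖z - q‖ ^ 2)) y
      (EuclideanSpace.single i 1)) y (EuclideanSpace.single i 1)
      = Real.exp (-α * ‖y - q‖ ^ 2) * (4 * α ^ 2 * (y i - q i) ^ 2 - 2 * α) := by
    intro i
    have h2 : (fun y => fderiv ℝ (fun z => Real.exp (-α * ‖z - q‖ ^ 2)) y
      (EuclideanSpace.single i 1)) = fun y => Real.exp (-α * ‖y - q‖ ^ 2)
        * ((-2 * α) * inner ℝ (y - q) (EuclideanSpace.single i (1 : ℝ))) := by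
      funext y
      rw [(hasFDerivAt_barrier α q y).fderiv]
      simp only [smul_apply, innerSL_apply_apply, smul_eq_mul]
      ring
    rw [h2]
    have h3 : HasFDerivAt (fun y => (-2 * α) * inner ℝ (y - q) (EuclideanSpace.single i (1 : ℝ)))
        ((-2 * α) • innerSL ℝ (EuclideanSpace.single i (1 : ℝ))) y := by
      have h4 : HasFDerivAt (fun y => innerSL ℝ (EuclideanSpace.single i (1 : ℝ)) (y - q))
          (innerSL ℝ (EuclideanSpace.single i (1 : ℝ))) y :=
        ((innerSL ℝ (EuclideanSpace.single i (1 : ℝ))).hasFDerivAt).comp y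
          ((hasFDerivAt_id y).sub_const q)
      have h5 := h4.const_mul (-2 * α)
      refine h5.congr_of_eventuallyEq (Filter.Eventually.of_forall fun z => ?_)
      simp only [innerSL_apply_apply]
      rw [real_inner_comm]
    rw [((hasFDerivAt_barrier α q y).fun_mul h3).fderiv]
    simp [EuclideanSpace.inner_single_right]
    ring
  rw [Finset.sum_congr rfl fun i _ => h1 i, ← Finset.mul_sum, Finset.sum_sub_distrib,
    ← Finset.mul_sum, EuclideanSpace.norm_sq_eq]
  simp
  ring

lemma contDiff_barrier (α : ℝ) (q : EuclideanSpace ℝ (Fin n)) :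
    ContDiff ℝ 2 (fun z => Real.exp (-α * ‖z - q‖ ^ 2)) :=
  (contDiff_const.mul ((contDiff_id.sub contDiff_const).norm_sq ℝ)).exp

/-- Hopf boundary point lemma -/
lemma hopf {f : EuclideanSpace ℝ (Fin n) → ℝ} {q y : EuclideanSpace ℝ (Fin n)} {ρ : ℝ}
    (hρ : 0 < ρ) (hf : ∀ z ∈ closedBall q ρ, ContDiffAt ℝ 2 f z)
    (hlap : ∀ z ∈ ball q ρ, lap f z = 0) (hlt : ∀ z ∈ ball q ρ, f z < f y)
    (hy : ‖y - q‖ = ρ) : 0 < fderiv ℝ f y (y - q) := by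
  have hyball : y ∈ closedBall q ρ := by simp [dist_eq_norm, hy]
  have hle : ∀ z ∈ closedBall q ρ, f z ≤ f y := by
    intro z hz
    have hz' : z ∈ closure (ball q ρ) := by rwa [closure_ball q hρ.ne']
    have hc : ContinuousWithinAt f (ball q ρ) z := (hf z hz).continuousAt.continuousWithinAt
    have := mem_closure_iff_nhdsWithin_neBot.1 hz'
    exact le_of_tendsto hc (Filter.eventually_of_mem self_mem_nhdsWithin
      fun w hw => (hlt w hw).le)
  have hsub : closedBall q (ρ / 2) ⊆ ball q ρ := closedBall_subset_ball (by linarith)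
  obtain ⟨m, hm, hmmax⟩ := (isCompact_closedBall q (ρ / 2)).exists_isMaxOn
    ⟨q, by simp; positivity⟩ (f := f)
    (fun z hz => (hf z (ball_subset_closedBall (hsub hz))).continuousAt.continuousWithinAt)
  have hmlt := hlt m (hsub hm)
  set ε := f y - f m with hε
  have hεpos : 0 < ε := by linarith
  set α : ℝ := (2 * n + 1) / ρ ^ 2 with hα
  have hαpos : 0 < α := by positivity
  have hαρ : α * ρ ^ 2 = 2 * n + 1 := by rw [hα]; field_simp
  set h : EuclideanSpace ℝ (Fin n) → ℝ := fun z => Real.exp (-α * ‖z - q‖ ^ 2) with hh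
  set F : EuclideanSpace ℝ (Fin n) → ℝ := fun z => f z + ε * h z with hF
  have hFc : ∀ z ∈ closedBall q ρ, ContDiffAt ℝ 2 F z := fun z hz =>
    (hf z hz).add (contDiffAt_const.mul (contDiff_barrier α q).contDiffAt)
  obtain ⟨z0, hz0, hz0max⟩ := (isCompact_closedBall q ρ).exists_isMaxOn
    ⟨y, hyball⟩ (f := F) (fun z hz => (hFc z hz).continuousAt.continuousWithinAt)
  have hz0y : F y ≤ F z0 := hz0max hyball
  have hhy : 0 < h y := Real.exp_pos _
  have hFz0 : F z0 ≤ F y := by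
    rcases le_or_gt ‖z0 - q‖ (ρ / 2) with h1 | h1
    · have h2 : f z0 ≤ f m := hmmax (by simpa [dist_eq_norm] using h1)
      have h3 : h z0 ≤ 1 := by
        apply Real.exp_le_one_iff.2
        have : 0 ≤ α * ‖z0 - q‖ ^ 2 := by positivity
        linarith
      simp only [hF]
      nlinarith
    · rcases lt_or_ge ‖z0 - q‖ ρ with h2 | h2
      · exfalso
        have hzb : z0 ∈ ball q ρ := by simpa [dist_eq_norm] using h2
        have hloc : IsLocalMax F z0 := hz0max.isLocalMax
          (Filter.mem_of_superset (isOpen_ball.mem_nhds hzb) ball_subset_closedBall)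
        have h3 := lap_nonpos_of_isLocalMax (hFc z0 hz0) hloc
        rw [hF, lap_add_const_mul (hf z0 hz0) (contDiff_barrier α q).contDiffAt,
          hlap z0 hzb, lap_barrier] at h3
        have h4 : ρ ^ 2 ≤ 4 * ‖z0 - q‖ ^ 2 := by nlinarith
        have h5 : 0 < 4 * α ^ 2 * ‖z0 - q‖ ^ 2 - 2 * α * n := by
          have : α * (α * ρ ^ 2) ≤ α * (α * (4 * ‖z0 - q‖ ^ 2)) := by gcongr
          rw [hαρ] at this
          nlinarith
        have h6 : 0 < ε * (Real.exp (-α * ‖z0 - q‖ ^ 2) *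
          (4 * α ^ 2 * ‖z0 - q‖ ^ 2 - 2 * α * n)) := by positivity
        linarith
      · have h3 : ‖z0 - q‖ = ρ := le_antisymm (by simpa [dist_eq_norm] using hz0) h2
        have h4 : h z0 = h y := by simp only [hh, h3, hy]
        simp only [hF, h4]
        have := hle z0 hz0
        linarith
  have hFmax : IsMaxOn F (closedBall q ρ) y := fun z hz => le_trans (hz0max hz) hFz0
  have hder : HasFDerivAt F (fderiv ℝ f y + ε • ((Real.exp (-α * ‖y - q‖ ^ 2) * (-2 * α)) •
      innerSL ℝ (y - q))) y :=
    ((hf y hyball).differentiableAt (by simp)).hasFDerivAt.add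
      ((hasFDerivAt_barrier α q y).const_mul ε)
  have h7 := (hFmax.localize).hasFDerivWithinAt_nonpos hder.hasFDerivWithinAt
    (sub_mem_posTangentConeAt_of_segment_subset
      ((convex_closedBall q ρ).segment_subset hyball (mem_closedBall_self hρ.le)))
  have h8 : q - y = -(y - q) := by abel
  rw [h8, map_neg] at h7
  simp only [add_apply, smul_apply, innerSL_apply_apply,
    real_inner_self_eq_norm_sq, smul_eq_mul] at h7
  have h9 : 0 < ε * (Real.exp (-α * ‖y - q‖ ^ 2) * (2 * α) * ‖y - q‖ ^ 2) := by
    rw [hy]; positivity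
  linarith

/-- Strong maximum principle: the contact set is open. -/
lemma strong_max {f : EuclideanSpace ℝ (Fin n) → ℝ} {Ω : Set (EuclideanSpace ℝ (Fin n))} {M : ℝ}
    (hΩ : IsOpen Ω) (hf : ∀ z ∈ Ω, ContDiffAt ℝ 2 f z) (hlap : ∀ z ∈ Ω, lap f z = 0)
    (hle : ∀ z ∈ Ω, f z ≤ M) : IsOpen {z | z ∈ Ω ∧ f z = M} := by
  rw [isOpen_iff_mem_nhds]
  rintro p ⟨hp, hpM⟩
  obtain ⟨r, hr, hrΩ⟩ := Metric.isOpen_iff.1 hΩ p hp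
  have hball : ∀ q ∈ ball p (r / 2), f q = M := by
    intro q hq
    by_contra hne
    have hqlt : dist q p < r / 2 := hq
    set S : Set (EuclideanSpace ℝ (Fin n)) := {z | z ∈ closedBall q (dist q p) ∧ f z = M} with hS
    have hcb : closedBall q (dist q p) ⊆ Ω := fun z hz => hrΩ (by
      have h1 : dist z q ≤ dist q p := hz
      have := dist_triangle z q p
      simp only [mem_ball]; linarith)
    have hScomp : IsCompact S := by
      have hcl : IsClosed S := by
        have : ContinuousOn f (closedBall q (dist q p)) :=
          fun z hz => (hf z (hcb hz)).continuousAt.continuousWithinAt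
        exact this.preimage_isClosed_of_isClosed isClosed_closedBall isClosed_singleton
      exact (isCompact_closedBall q (dist q p)).of_isClosed_subset hcl fun z hz => hz.1
    obtain ⟨y, hyS, hymin⟩ := hScomp.exists_isMinOn ⟨p, by simp [dist_comm], hpM⟩
      (f := fun z => dist z q) (by fun_prop)
    have hyq : y ≠ q := fun h => hne (h ▸ hyS.2)
    have hρ : 0 < ‖y - q‖ := norm_pos_iff.2 (sub_ne_zero.2 hyq)
    have hyle : dist y q ≤ dist q p := hyS.1
    have hsub : closedBall q ‖y - q‖ ⊆ closedBall q (dist q p) :=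
      closedBall_subset_closedBall (by rw [← dist_eq_norm]; exact hyle)
    have h1 := hopf (f := f) (q := q) (y := y) hρ (fun z hz => hf z (hcb (hsub hz)))
      (fun z hz => hlap z (hcb (hsub (ball_subset_closedBall hz))))
      (fun z hz => by
        have hz1 := hsub (ball_subset_closedBall hz)
        rw [hyS.2]
        refine lt_of_le_of_ne (hle z (hcb hz1)) fun h => ?_
        have h2 : dist y q ≤ dist z q := hymin (show z ∈ S from ⟨hz1, h⟩)
        have h3 : dist z q < ‖y - q‖ := hz
        rw [← dist_eq_norm] at h3
        linarith) rfl
    have h2 : IsLocalMax f y := by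
      filter_upwards [hΩ.mem_nhds (hcb hyS.1)] with z hz
      rw [hyS.2]; exact hle z hz
    rw [h2.fderiv_eq_zero] at h1
    simp at h1
  filter_upwards [ball_mem_nhds p (half_pos hr)] with z hz
  exact ⟨hrΩ (ball_subset_ball (by linarith) hz), hball z hz⟩

/-- Directional derivatives of harmonic functions are harmonic. -/
lemma lap_fderiv_apply {U : EuclideanSpace ℝ (Fin n) → ℝ} {Ω : Set (EuclideanSpace ℝ (Fin n))}
    (hΩ : IsOpen Ω) (hU : ∀ z ∈ Ω, ContDiffAt ℝ 3 U z) (hlap : ∀ z ∈ Ω, lap U z = 0)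
    (v : EuclideanSpace ℝ (Fin n)) :
    ∀ z ∈ Ω, lap (fun y => fderiv ℝ U y v) z = 0 := by
  have hsymm : ∀ z ∈ Ω, ∀ a b, fderiv ℝ (fun y => fderiv ℝ U y a) z b
      = fderiv ℝ (fun y => fderiv ℝ U y b) z a := by
    intro z hz a b
    have h1 : DifferentiableAt ℝ (fderiv ℝ U) z :=
      ((hU z hz).fderiv_right (m := 1) (by norm_num)).differentiableAt (by simp)
    have h2 := (hU z hz).isSymmSndFDerivAt (by simp; norm_num)
    rw [(h1.hasFDerivAt.clm_apply (hasFDerivAt_const a z)).fderiv,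
      (h1.hasFDerivAt.clm_apply (hasFDerivAt_const b z)).fderiv]
    simpa using h2 b a
  have hC2 : ∀ z ∈ Ω, ∀ a, ContDiffAt ℝ 2 (fun y => fderiv ℝ U y a) z := fun z hz a =>
    ((hU z hz).fderiv_right (m := 2) (by norm_num)).clm_apply contDiffAt_const
  have hsymm2 : ∀ z ∈ Ω, ∀ c a b, fderiv ℝ (fun y => fderiv ℝ (fun w => fderiv ℝ U w c) y a) z b
      = fderiv ℝ (fun y => fderiv ℝ (fun w => fderiv ℝ U w c) y b) z a := by
    intro z hz c a b
    have h1 : DifferentiableAt ℝ (fderiv ℝ (fun w => fderiv ℝ U w c)) z :=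
      ((hC2 z hz c).fderiv_right (m := 1) (by norm_num)).differentiableAt (by simp)
    have h2 := (hC2 z hz c).isSymmSndFDerivAt (by simp)
    rw [(h1.hasFDerivAt.clm_apply (hasFDerivAt_const a z)).fderiv,
      (h1.hasFDerivAt.clm_apply (hasFDerivAt_const b z)).fderiv]
    simpa using h2 b a
  intro z hz
  have hΩz := hΩ.mem_nhds hz
  have h1 : lap (fun y => fderiv ℝ U y v) z = fderiv ℝ (lap U) z v := by
    have h2 : fderiv ℝ (lap U) z = ∑ i : Fin n, fderiv ℝ (fun x =>
        fderiv ℝ (fun y => fderiv ℝ U y (EuclideanSpace.single i 1)) x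
          (EuclideanSpace.single i 1)) z := by
      unfold lap
      exact fderiv_fun_sum fun i _ => hasFDerivAt_fderiv_apply (hC2 z hz _) _
    rw [h2]
    simp only [sum_apply]
    unfold lap
    refine Finset.sum_congr rfl fun i _ => ?_
    have h3 : (fun y => fderiv ℝ (fun y => fderiv ℝ U y v) y (EuclideanSpace.single i 1))
        =ᶠ[nhds z] fun y => fderiv ℝ (fun y => fderiv ℝ U y (EuclideanSpace.single i 1)) y v := by
      filter_upwards [hΩz] with y hy using hsymm y hy _ _
    rw [h3.fderiv_eq]
    exact hsymm2 z hz _ _ _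
  rw [h1]
  have h4 : lap U =ᶠ[nhds z] fun _ => 0 := by
    filter_upwards [hΩz] with y hy using hlap y hy
  rw [h4.fderiv_eq]
  simp

/-- The part of the hypotheses that is used. -/
structure Setup (u Uext : EuclideanSpace ℝ (Fin n) → ℝ) : Prop where
  nonneg : ∀ x, 0 ≤ u x
  cont : Continuous u
  hom : ∀ t : ℝ, 0 < t → ∀ x, u (t • x) = t * u x
  harm : ∀ x ∈ {x | 0 < u x}, lap Uext x = 0
  smooth : ∀ x ∈ closure {x | 0 < u x} \ {0}, ContDiffAt ℝ 3 Uext x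
  eq : ∀ x ∈ closure {x | 0 < u x}, Uext x = u x
  grad1 : ∀ x ∈ freeBoundary u, ‖gradient Uext x‖ = 1

namespace Setup

variable {u Uext : EuclideanSpace ℝ (Fin n) → ℝ}

lemma isOpen (S : Setup u Uext) : IsOpen {x | 0 < u x} :=
  isOpen_lt continuous_const S.cont

lemma zero (S : Setup u Uext) : u 0 = 0 := by
  have := S.hom 2 (by norm_num) 0
  simp at this
  linarith

lemma ne_zero (S : Setup u Uext) {y : EuclideanSpace ℝ (Fin n)} (hy : 0 < u y) : y ≠ 0 := by
  rintro rfl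
  rw [S.zero] at hy
  exact lt_irrefl _ hy

lemma smooth' (S : Setup u Uext) {y : EuclideanSpace ℝ (Fin n)} (hy : 0 < u y) :
    ContDiffAt ℝ 3 Uext y :=
  S.smooth y ⟨subset_closure hy, S.ne_zero hy⟩

lemma evEq (S : Setup u Uext) {y : EuclideanSpace ℝ (Fin n)} (hy : 0 < u y) :
    Uext =ᶠ[nhds y] u := by
  filter_upwards [S.isOpen.mem_nhds hy] with z hz using S.eq z (subset_closure hz)

lemma hasFDerivAt (S : Setup u Uext) {y : EuclideanSpace ℝ (Fin n)} (hy : 0 < u y) :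
    HasFDerivAt u (fderiv ℝ Uext y) y :=
  (((S.smooth' hy).differentiableAt (by simp)).hasFDerivAt).congr_of_eventuallyEq (S.evEq hy).symm

lemma euler (S : Setup u Uext) {y : EuclideanSpace ℝ (Fin n)} (hy : 0 < u y) :
    fderiv ℝ Uext y y = u y := by
  have h1 : HasDerivAt (fun t : ℝ => t • y) y 1 := by
    simpa using (hasDerivAt_id (1 : ℝ)).smul_const y
  have h2 : HasFDerivAt u (fderiv ℝ Uext y) ((1 : ℝ) • y) := by
    rw [one_smul]; exact S.hasFDerivAt hy
  have h3 := h2.comp_hasDerivAt (1 : ℝ) h1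
  have h4 : HasDerivAt (fun t : ℝ => t * u y) (u y) 1 := by
    simpa using (hasDerivAt_id (1 : ℝ)).mul_const (u y)
  have h5 : (u ∘ fun t : ℝ => t • y) =ᶠ[nhds 1] fun t : ℝ => t * u y := by
    filter_upwards [lt_mem_nhds (zero_lt_one' ℝ)] with t ht using S.hom t ht y
  exact (h3.congr_of_eventuallyEq h5.symm).unique h4

lemma pos_smul (S : Setup u Uext) {y : EuclideanSpace ℝ (Fin n)} (hy : 0 < u y) {t : ℝ}
    (ht : 0 < t) : 0 < u (t • y) := by
  rw [S.hom t ht]; positivity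

lemma fderiv_smul (S : Setup u Uext) {y : EuclideanSpace ℝ (Fin n)} (hy : 0 < u y) {t : ℝ}
    (ht : 0 < t) : fderiv ℝ Uext (t • y) = fderiv ℝ Uext y := by
  have h1 : HasFDerivAt (fun z : EuclideanSpace ℝ (Fin n) => t • z)
      (t • ContinuousLinearMap.id ℝ (EuclideanSpace ℝ (Fin n))) y :=
    (hasFDerivAt_id y).const_smul t
  have h2 := (S.hasFDerivAt (S.pos_smul hy ht)).comp y h1
  have h3 := (S.hasFDerivAt hy).const_mul t
  have h4 : (u ∘ fun z => t • z) = fun z => t * u z := by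
    funext z; exact S.hom t ht z
  rw [h4] at h2
  have h5 := h2.unique h3
  ext v
  have h6 := congrArg (fun L => L v) h5
  simp at h6
  rcases h6 with h6 | h6
  · exact h6
  · exact absurd h6 ht.ne'

lemma gradient_smul (S : Setup u Uext) {y : EuclideanSpace ℝ (Fin n)} (hy : 0 < u y) {t : ℝ}
    (ht : 0 < t) : gradient Uext (t • y) = gradient Uext y := by
  unfold gradient; rw [S.fderiv_smul hy ht]

/-- At an interior maximum of the gradient, the solution is linear on a half-space. -/
lemma half (S : Setup u Uext) {p : EuclideanSpace ℝ (Fin n)} (hp : 0 < u p)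
    (hmax : ∀ y, 0 < u y → ‖gradient Uext y‖ ≤ ‖gradient Uext p‖) :
    ∀ y, 0 < (⟪y, gradient Uext p⟫ : ℝ) → u y = ⟪y, gradient Uext p⟫ := by
  set e := gradient Uext p with he
  set A : Set (EuclideanSpace ℝ (Fin n)) :=
    {z | z ∈ {x | 0 < u x} ∧ fderiv ℝ Uext z e = ‖e‖ ^ 2} with hA
  have hAo : IsOpen A := by
    refine strong_max S.isOpen (fun z hz => ?_)
      (lap_fderiv_apply S.isOpen (fun z hz => S.smooth' hz) S.harm e) (fun z hz => ?_)
    · exact ((S.smooth' hz).fderiv_right (m := 2) (by norm_num)).clm_apply contDiffAt_const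
    · rw [← inner_gradient_left]
      have h1 := real_inner_le_norm (gradient Uext z) e
      have h2 := hmax z hz
      nlinarith [norm_nonneg e]
  have hAlin : ∀ z ∈ A, u z = ⟪z, e⟫ := by
    rintro z ⟨hz, hze⟩
    have h1 : gradient Uext z = e := by
      rw [← sub_eq_zero, ← norm_eq_zero, ← sq_eq_zero_iff]
      apply le_antisymm _ (by positivity)
      rw [norm_sub_sq_real, inner_gradient_left, hze]
      have h2 := hmax z hz
      nlinarith [norm_nonneg e, norm_nonneg (gradient Uext z)]
    rw [← S.euler hz, ← inner_gradient_left, h1, real_inner_comm]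
  have hpA : p ∈ A := by
    refine ⟨hp, ?_⟩
    rw [← inner_gradient_left, ← he, real_inner_self_eq_norm_sq]
  have hclos : ∀ z ∈ closure A, u z = ⟪z, e⟫ := by
    have hcl : IsClosed {z | u z = (⟪z, e⟫ : ℝ)} := isClosed_eq S.cont (by fun_prop)
    exact fun z hz => closure_minimal (fun z hz => hAlin z hz) hcl hz
  have hH : IsPreconnected {y | 0 < (⟪y, e⟫ : ℝ)} := by
    apply Convex.isPreconnected
    have := convex_halfSpace_gt (𝕜 := ℝ) (f := fun y => (⟪y, e⟫ : ℝ))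
      ⟨fun x y => inner_add_left x y e, fun c x => by simp [inner_smul_left]⟩ 0
    exact this
  have hsub := hH.subset_of_closure_inter_subset hAo
    ⟨p, by
      show 0 < (⟪p, e⟫ : ℝ)
      rw [← hAlin p hpA]; exact hp, hpA⟩ (by
      rintro z ⟨hzA, hz⟩
      have hzP : 0 < u z := by rw [hclos z hzA]; exact hz
      refine ⟨hzP, ?_⟩
      have hc : ContinuousAt (fun y => fderiv ℝ Uext y e) z :=
        (((S.smooth' hzP).fderiv_right (m := 2) (by norm_num)).clm_apply
          contDiffAt_const).continuousAt
      have := mem_closure_iff_nhdsWithin_neBot.1 hzA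
      refine tendsto_nhds_unique (hc.continuousWithinAt (s := A)).tendsto
        ((tendsto_const_nhds (x := ‖e‖ ^ 2)).congr' ?_)
      exact Filter.eventually_of_mem self_mem_nhdsWithin fun w hw => hw.2.symm)
  exact fun y hy => hAlin y (hsub hy)

/-- An orthogonal nonzero vector exists. -/
lemma _root_.exists_orth (hn : 3 ≤ n) (e : EuclideanSpace ℝ (Fin n)) :
    ∃ z : EuclideanSpace ℝ (Fin n), z ≠ 0 ∧ (⟪z, e⟫ : ℝ) = 0 := by
  have h1 := LinearMap.ker_ne_bot_of_finrank_lt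
    (f := (innerSL ℝ e : EuclideanSpace ℝ (Fin n) →L[ℝ] ℝ).toLinearMap)
    (by simp; omega)
  obtain ⟨z, hz, hz0⟩ := Submodule.exists_mem_ne_zero_of_ne_bot h1
  refine ⟨z, hz0, ?_⟩
  rw [real_inner_comm]
  simpa using hz

section linear

variable {e : EuclideanSpace ℝ (Fin n)}

lemma _root_.tendsto_line (z e : EuclideanSpace ℝ (Fin n)) :
    Filter.Tendsto (fun t : ℝ => z + t • e) (nhds 0) (nhds z) := by
  have : Continuous (fun t : ℝ => z + t • e) := by fun_prop
  simpa using this.tendsto 0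

lemma closed_half (S : Setup u Uext) (he : e ≠ 0)
    (hlin : ∀ y, 0 < (⟪y, e⟫ : ℝ) → u y = ⟪y, e⟫) :
    ∀ y, 0 ≤ (⟪y, e⟫ : ℝ) → y ∈ closure {x | 0 < u x} ∧ u y = ⟪y, e⟫ := by
  intro y hy
  have h0 : y ∈ closure {x | 0 < (⟪x, e⟫ : ℝ)} := by
    refine mem_closure_of_tendsto ((tendsto_line y e).mono_left
      (nhdsWithin_le_nhds (s := Ioi 0))) ?_
    refine Filter.eventually_of_mem self_mem_nhdsWithin fun t ht => ?_
    have ht' : (0 : ℝ) < t := ht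
    simp only [mem_ofPred_eq, inner_add_left, inner_smul_left, real_inner_self_eq_norm_sq]
    have : 0 < ‖e‖ := norm_pos_iff.2 he
    simp only [conj_trivial]
    positivity
  have hcl : IsClosed {z | u z = (⟪z, e⟫ : ℝ)} := isClosed_eq S.cont (by fun_prop)
  refine ⟨closure_mono (fun z hz => ?_) h0, closure_minimal (fun z hz => hlin z hz) hcl h0⟩
  have hz' : 0 < (⟪z, e⟫ : ℝ) := hz
  simp only [mem_ofPred_eq]
  rw [hlin z hz']; exact hz'

lemma bdry (S : Setup u Uext) (he : e ≠ 0)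
    (hlin : ∀ y, 0 < (⟪y, e⟫ : ℝ) → u y = ⟪y, e⟫) {z : EuclideanSpace ℝ (Fin n)}
    (hz0 : z ≠ 0) (hz : (⟪z, e⟫ : ℝ) = 0) :
    z ∈ freeBoundary u ∧ gradient Uext z = e := by
  have hch := S.closed_half he hlin
  obtain ⟨hzc, hzu⟩ := hch z hz.ge
  constructor
  · refine ⟨⟨hzc, ?_⟩, hz0⟩
    rw [S.isOpen.interior_eq]
    simp [hzu, hz]
  · set H : Set (EuclideanSpace ℝ (Fin n)) := {y | 0 ≤ (⟪y, e⟫ : ℝ)} with hH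
    have hconv : Convex ℝ H := convex_halfSpace_ge (𝕜 := ℝ) (f := fun y => (⟪y, e⟫ : ℝ))
      ⟨fun x y => inner_add_left x y e, fun c x => by simp [inner_smul_left]⟩ 0
    have hzH : z ∈ H := hz.ge
    have hint : (interior H).Nonempty := by
      refine ⟨e, mem_interior.2 ⟨{y | 0 < (⟪y, e⟫ : ℝ)}, fun y hy => le_of_lt (show 0 < (⟪y, e⟫ : ℝ) from hy),
        isOpen_lt continuous_const (by fun_prop), ?_⟩⟩
      simp only [mem_ofPred_eq, real_inner_self_eq_norm_sq]
      have : 0 < ‖e‖ := norm_pos_iff.2 he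
      positivity
    have huniq := uniqueDiffWithinAt_convex hconv hint (subset_closure hzH)
    have h1 : HasFDerivWithinAt Uext (fderiv ℝ Uext z) H z :=
      ((S.smooth z ⟨hzc, hz0⟩).differentiableAt (by simp)).hasFDerivAt.hasFDerivWithinAt
    have h2 : HasFDerivWithinAt Uext (innerSL ℝ e : EuclideanSpace ℝ (Fin n) →L[ℝ] ℝ) H z := by
      refine ((innerSL ℝ e : EuclideanSpace ℝ (Fin n) →L[ℝ] ℝ).hasFDerivAt
        (x := z)).hasFDerivWithinAt.congr (fun y hy => ?_) ?_
      · rw [S.eq y (hch y hy).1, (hch y hy).2, innerSL_apply_apply, real_inner_comm]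
      · rw [S.eq z hzc, hzu, innerSL_apply_apply, real_inner_comm]
    have h3 := huniq.eq h1 h2
    refine ext_inner_right ℝ fun v => ?_
    rw [inner_gradient_left, h3, innerSL_apply_apply]

lemma no_touch (S : Setup u Uext) (he1 : ‖e‖ = 1)
    (hlin : ∀ y, 0 < (⟪y, e⟫ : ℝ) → u y = ⟪y, e⟫) {z : EuclideanSpace ℝ (Fin n)}
    (hz0 : z ≠ 0) (hz : (⟪z, e⟫ : ℝ) = 0) :
    ∀ᶠ y in nhds z, (⟪y, e⟫ : ℝ) < 0 → ¬ 0 < u y := by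
  have he : e ≠ 0 := by rintro rfl; simp at he1
  have hch := S.closed_half he hlin
  obtain ⟨hzF, hzg⟩ := S.bdry he hlin hz0 hz
  have h1 : HasStrictFDerivAt Uext (fderiv ℝ Uext z) z :=
    (S.smooth z ⟨(hch z hz.ge).1, hz0⟩).hasStrictFDerivAt (by simp)
  have h2 := h1.isLittleO.def (c := 1 / 2) (by norm_num)
  have h3 : Filter.Tendsto (fun y => (y, y - (⟪y, e⟫ : ℝ) • e)) (nhds z) (nhds (z, z)) := by
    have hc : Continuous (fun y : EuclideanSpace ℝ (Fin n) => (y, y - (⟪y, e⟫ : ℝ) • e)) := by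
      fun_prop
    have := hc.tendsto z
    simpa [hz] using this
  filter_upwards [h3.eventually h2] with y hy hye hyu
  have h4 : (⟪y - (⟪y, e⟫ : ℝ) • e, e⟫ : ℝ) = 0 := by
    simp [inner_sub_left, inner_smul_left, real_inner_self_eq_norm_sq, he1]
  have h5 : Uext (y - (⟪y, e⟫ : ℝ) • e) = 0 := by
    rw [S.eq _ (hch _ h4.ge).1, (hch _ h4.ge).2, h4]
  have h6 : Uext y = u y := S.eq y (subset_closure hyu)
  simp only [h5, h6, sub_sub_cancel, map_smul, ← inner_gradient_left, hzg, norm_smul, he1,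
    real_inner_self_eq_norm_sq, smul_eq_mul, Real.norm_eq_abs] at hy
  rw [abs_of_neg hye] at hy
  have := (abs_le.1 hy).2
  linarith

lemma no_half (S : Setup u Uext) (hn : 3 ≤ n) (he1 : ‖e‖ = 1)
    (hlin : ∀ y, 0 < (⟪y, e⟫ : ℝ) → u y = ⟪y, e⟫) :
    ∀ y, u y = max ⟪y, e⟫ 0 := by
  have he : e ≠ 0 := by rintro rfl; simp at he1
  have hch := S.closed_half he hlin
  set N : Set (EuclideanSpace ℝ (Fin n)) := {y | (⟪y, e⟫ : ℝ) < 0} with hN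
  have hNo : IsOpen N := isOpen_lt (by fun_prop) continuous_const
  set D : Set (EuclideanSpace ℝ (Fin n)) := {x | 0 < u x} ∩ N with hD
  have hDo : IsOpen D := S.isOpen.inter hNo
  suffices hDe : D = ∅ by
    intro y
    rcases le_or_gt 0 (⟪y, e⟫ : ℝ) with h | h
    · rw [(hch y h).2, max_eq_left h]
    · rw [max_eq_right h.le]
      refine le_antisymm ?_ (S.nonneg y)
      by_contra hcon
      have : y ∈ D := ⟨not_le.1 hcon, h⟩
      rw [hDe] at this
      exact this
  by_contra hne
  obtain ⟨q, hq⟩ := nonempty_iff_ne_empty.2 hne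
  set K := closure D ∩ sphere (0 : EuclideanSpace ℝ (Fin n)) 1 with hK
  have hKc : IsCompact K := (isCompact_sphere _ _).inter_left isClosed_closure
  have hscale : ∀ y ∈ D, y ≠ 0 ∧ 0 < ‖y‖⁻¹ ∧ ‖y‖⁻¹ • y ∈ K := by
    intro y hy
    have hy0 := S.ne_zero hy.1
    have hpos : 0 < ‖y‖⁻¹ := inv_pos.2 (norm_pos_iff.2 hy0)
    refine ⟨hy0, hpos, subset_closure ⟨S.pos_smul hy.1 hpos, ?_⟩, ?_⟩
    · have : (⟪y, e⟫ : ℝ) < 0 := hy.2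
      simp only [hN, mem_ofPred_eq, inner_smul_left, conj_trivial]
      nlinarith
    · simp [norm_smul, hy0]
  have hKneg : ∀ y ∈ K, (⟪y, e⟫ : ℝ) < 0 := by
    rintro y ⟨hyD, hys⟩
    have hle : (⟪y, e⟫ : ℝ) ≤ 0 :=
      closure_minimal (t := {y | (⟪y, e⟫ : ℝ) ≤ 0}) (fun w hw => le_of_lt (show (⟪w, e⟫ : ℝ) < 0 from hw.2))
        (isClosed_le (by fun_prop) continuous_const) hyD
    refine lt_of_le_of_ne hle fun h => ?_
    have hy0 : y ≠ 0 := by rintro rfl; simp at hys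
    have h1 := S.no_touch he1 hlin hy0 h
    obtain ⟨w, hw1, hw2⟩ := ((mem_closure_iff_frequently.1 hyD).and_eventually h1).exists
    exact hw2 hw1.2 hw1.1
  obtain ⟨p, hpK, hpmax⟩ := hKc.exists_isMaxOn ⟨_, (hscale q hq).2.2⟩
    (f := fun y => u y / (-(⟪y, e⟫ : ℝ)))
    (ContinuousOn.div S.cont.continuousOn (by fun_prop) fun y hy => by
      have := hKneg y hy
      linarith)
  set m := u p / (-(⟪p, e⟫ : ℝ)) with hm
  have hDle : ∀ y ∈ D, u y ≤ m * (-(⟪y, e⟫ : ℝ)) := by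
    intro y hy
    obtain ⟨hy0, hpos, hyK⟩ := hscale y hy
    have h1 : u (‖y‖⁻¹ • y) / (-(⟪‖y‖⁻¹ • y, e⟫ : ℝ)) ≤ m := hpmax hyK
    have hyneg : (⟪y, e⟫ : ℝ) < 0 := hy.2
    rw [S.hom _ hpos, inner_smul_left, conj_trivial, ← mul_neg,
      mul_div_mul_left _ _ hpos.ne', div_le_iff₀ (by linarith)] at h1
    exact h1
  have hpneg := hKneg p hpK
  have hmpos : 0 < m := by
    have h1 := hDle q hq
    have h2 : 0 < u q := hq.1
    have h3 : (⟪q, e⟫ : ℝ) < 0 := hq.2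
    by_contra hcon
    push Not at hcon
    nlinarith
  have hpu : u p = m * (-(⟪p, e⟫ : ℝ)) := by
    rw [hm, div_mul_cancel₀]
    linarith
  have hpD : p ∈ D := by
    refine ⟨?_, hpneg⟩
    simp only [mem_ofPred_eq]
    rw [hpu]
    apply mul_pos hmpos; linarith
  have hg2 : ContDiff ℝ 2 (fun y : EuclideanSpace ℝ (Fin n) => (⟪y, e⟫ : ℝ)) :=
    contDiff_id.inner ℝ contDiff_const
  have hglap : ∀ y, lap (fun y : EuclideanSpace ℝ (Fin n) => (⟪y, e⟫ : ℝ)) y = 0 := by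
    intro y
    have h1 : (fun y : EuclideanSpace ℝ (Fin n) => (⟪y, e⟫ : ℝ))
        = (innerSL ℝ e : EuclideanSpace ℝ (Fin n) →L[ℝ] ℝ) := by
      funext y; rw [innerSL_apply_apply, real_inner_comm]
    unfold lap
    rw [h1]
    simp only [ContinuousLinearMap.fderiv]
    simp
  have hUD : ∀ y ∈ D, Uext y = u y := fun y hy => S.eq y (subset_closure hy.1)
  have hBo := strong_max (f := fun y => Uext y + m * (⟪y, e⟫ : ℝ)) (M := 0) hDo
    (fun z hz => ((S.smooth' hz.1).of_le (by norm_num)).add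
      (contDiffAt_const.mul hg2.contDiffAt))
    (fun z hz => by
      rw [lap_add_const_mul ((S.smooth' hz.1).of_le (by norm_num)) hg2.contDiffAt, hglap,
        S.harm z hz.1]
      simp)
    (fun z hz => by
      have := hDle z hz
      rw [hUD z hz]; linarith)
  set B := {z | z ∈ D ∧ Uext z + m * (⟪z, e⟫ : ℝ) = 0} with hB
  have hBu : ∀ z ∈ closure B, u z = m * (-(⟪z, e⟫ : ℝ)) := by
    have hcl : IsClosed {z | u z = m * (-(⟪z, e⟫ : ℝ))} := isClosed_eq S.cont (by fun_prop)
    refine fun z hz => closure_minimal (fun w hw => ?_) hcl hz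
    have h1 := hw.2
    rw [hUD w hw.1] at h1
    simp only [mem_ofPred_eq]
    linarith
  have hNpre : IsPreconnected N := by
    apply Convex.isPreconnected
    exact convex_halfSpace_lt (𝕜 := ℝ) (f := fun y => (⟪y, e⟫ : ℝ))
      ⟨fun x y => inner_add_left x y e, fun c x => by simp [inner_smul_left]⟩ 0
  have hNB := hNpre.subset_of_closure_inter_subset hBo
    ⟨p, hpneg, hpD, by rw [hUD p hpD, hpu]; ring⟩ (by
      rintro z ⟨hzB, hzN⟩
      have h1 := hBu z hzB
      have hzN' : (⟪z, e⟫ : ℝ) < 0 := hzN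
      have hzD : z ∈ D := by
        refine ⟨?_, hzN⟩
        simp only [mem_ofPred_eq]
        rw [h1]
        apply mul_pos hmpos; linarith
      refine ⟨hzD, ?_⟩
      rw [hUD z hzD, h1]; ring)
  obtain ⟨z, hz0, hz⟩ := exists_orth hn e
  have h1 := S.no_touch he1 hlin hz0 hz
  have h2 := ((tendsto_line z e).mono_left (nhdsWithin_le_nhds (s := Iio 0))).eventually h1
  obtain ⟨t, ht1, ht2⟩ := (h2.and (Filter.eventually_of_mem self_mem_nhdsWithin
    fun t ht => ht)).exists
  have hneg : (⟪z + t • e, e⟫ : ℝ) < 0 := by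
    simp only [inner_add_left, inner_smul_left, real_inner_self_eq_norm_sq, hz, he1, conj_trivial]
    have : t < 0 := ht2
    linarith
  exact ht1 hneg (hNB hneg).1.1

end linear

lemma no_interior_max (S : Setup u Uext) (hn : 3 ≤ n)
    (hNotLin : ¬ ∃ ν : EuclideanSpace ℝ (Fin n), ‖ν‖ = 1 ∧ ∀ x, u x = max ⟪x, ν⟫ 0)
    {p : EuclideanSpace ℝ (Fin n)} (hp : 0 < u p)
    (hmax : ∀ y, 0 < u y → ‖gradient Uext y‖ ≤ ‖gradient Uext p‖) : False := by
  have hlin := S.half hp hmax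
  have he : gradient Uext p ≠ 0 := by
    intro h
    have h1 := S.euler hp
    rw [← inner_gradient_left, h, inner_zero_left] at h1
    linarith
  obtain ⟨z, hz0, hz⟩ := exists_orth hn (gradient Uext p)
  obtain ⟨hzF, hzg⟩ := S.bdry he hlin hz0 hz
  have he1 : ‖gradient Uext p‖ = 1 := by rw [← hzg]; exact S.grad1 z hzF
  exact hNotLin ⟨_, he1, S.no_half hn he1 hlin⟩

lemma continuousAt_gradient (S : Setup u Uext) {y : EuclideanSpace ℝ (Fin n)}
    (hy : y ∈ closure {x | 0 < u x} \ {0}) : ContinuousAt (gradient Uext) y := by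
  have h1 : ContinuousAt (fderiv ℝ Uext) y :=
    ((S.smooth y hy).fderiv_right (m := 2) (by norm_num)).continuousAt
  exact (InnerProductSpace.toDual ℝ
    (EuclideanSpace ℝ (Fin n))).symm.continuous.continuousAt.comp h1

lemma gradient_lt (S : Setup u Uext) (hn : 3 ≤ n)
    (hNotLin : ¬ ∃ ν : EuclideanSpace ℝ (Fin n), ‖ν‖ = 1 ∧ ∀ x, u x = max ⟪x, ν⟫ 0)
    {y : EuclideanSpace ℝ (Fin n)} (hy : 0 < u y) : ‖gradient Uext y‖ < 1 := by
  set K := closure {x | 0 < u x} ∩ sphere (0 : EuclideanSpace ℝ (Fin n)) 1 with hK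
  have hKc : IsCompact K := (isCompact_sphere _ _).inter_left isClosed_closure
  have hKne : ∀ w ∈ K, w ≠ 0 := by
    rintro w hw rfl
    simpa using hw.2
  have hscale : ∀ y, 0 < u y → 0 < ‖y‖⁻¹ ∧ ‖y‖⁻¹ • y ∈ K := by
    intro y hy
    have hy0 := S.ne_zero hy
    have hpos : 0 < ‖y‖⁻¹ := inv_pos.2 (norm_pos_iff.2 hy0)
    exact ⟨hpos, subset_closure (S.pos_smul hy hpos), by simp [norm_smul, hy0]⟩
  obtain ⟨p, hpK, hpmax⟩ := hKc.exists_isMaxOn ⟨_, (hscale y hy).2⟩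
    (f := fun y => ‖gradient Uext y‖)
    (fun w hw => (S.continuousAt_gradient ⟨hw.1, hKne w hw⟩).norm.continuousWithinAt)
  have hall : ∀ w, 0 < u w → ‖gradient Uext w‖ ≤ ‖gradient Uext p‖ := by
    intro w hw
    obtain ⟨hpos, hwK⟩ := hscale w hw
    rw [← S.gradient_smul hw hpos]
    exact hpmax hwK
  have hpP : ¬ 0 < u p := fun h => S.no_interior_max hn hNotLin h hall
  have hpF : p ∈ freeBoundary u := by
    refine ⟨⟨hpK.1, ?_⟩, hKne p hpK⟩
    rw [S.isOpen.interior_eq]; exact hpP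
  have hp1 := S.grad1 p hpF
  rw [hp1] at hall
  refine lt_of_le_of_ne (hall y hy) fun h => ?_
  rw [← h] at hall
  exact S.no_interior_max hn hNotLin hy hall

lemma interior_ball (S : Setup u Uext) {x : EuclideanSpace ℝ (Fin n)} (hx : x ∈ freeBoundary u)
    {V : Set (EuclideanSpace ℝ (Fin n))} (hV : V ∈ nhds x) :
    ∃ ρ > 0, closedBall (x + ρ • gradient Uext x) ρ ⊆ V ∧
      ball (x + ρ • gradient Uext x) ρ ⊆ {x | 0 < u x} := by
  set g := gradient Uext x with hg
  have hg1 : ‖g‖ = 1 := S.grad1 x hx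
  have hxc : x ∈ closure {x | 0 < u x} := hx.1.1
  have hsm := S.smooth x ⟨hxc, hx.2⟩
  have hxu : u x = 0 := by
    have h1 : x ∉ {x | 0 < u x} := by
      have := hx.1.2
      rwa [S.isOpen.interior_eq] at this
    exact le_antisymm (not_lt.1 h1) (S.nonneg x)
  have hxU : Uext x = 0 := by rw [S.eq x hxc, hxu]
  obtain ⟨K, t, ht, hKt⟩ :=
    (hsm.fderiv_right (m := 1) (by norm_num)).exists_lipschitzOnWith
  have hdiff : ∀ᶠ y in nhds x, DifferentiableAt ℝ Uext y := by
    filter_upwards [hsm.eventually (by simp)] with y hy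
    exact hy.differentiableAt (by simp)
  obtain ⟨r0, hr0, hr0sub⟩ := Metric.mem_nhds_iff.1 (Filter.inter_mem (Filter.inter_mem ht hV) hdiff)
  have hK0 : (0 : ℝ) ≤ K := K.2
  set r : ℝ := min r0 (1 / (2 * (K + 1))) with hr
  have hrpos : 0 < r := lt_min hr0 (by positivity)
  have hKr : K * r ≤ 1 / 2 := by
    have h1 : r ≤ 1 / (2 * (K + 1)) := min_le_right _ _
    rw [le_div_iff₀ (by positivity)] at h1
    nlinarith
  have hrsub : ball x r ⊆ (t ∩ V) ∩ {y | DifferentiableAt ℝ Uext y} :=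
    (ball_subset_ball (min_le_left _ _)).trans hr0sub
  have hfd : ∀ s ≤ r, ∀ z ∈ ball x s, ‖fderiv ℝ Uext z - fderiv ℝ Uext x‖ ≤ K * s := by
    intro s hs z hz
    have h1 := hKt.dist_le_mul z (hrsub (ball_subset_ball hs hz)).1.1 x (mem_of_mem_nhds ht)
    rw [dist_eq_norm] at h1
    refine h1.trans ?_
    have : dist z x ≤ s := le_of_lt hz
    gcongr
  have hmv : ∀ s ≤ r, ∀ y ∈ ball x s, ∀ z ∈ ball x s,
      ‖Uext z - Uext y - fderiv ℝ Uext x (z - y)‖ ≤ K * s * ‖z - y‖ := by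
    intro s hs y hy z hz
    exact Convex.norm_image_sub_le_of_norm_hasFDerivWithin_le'
      (fun w hw => (hrsub (ball_subset_ball hs hw)).2.hasFDerivAt.hasFDerivWithinAt)
      (hfd s hs) (convex_ball x s) hy hz
  set ρ := r / 4 with hρ
  have hρpos : 0 < ρ := by positivity
  have hballsub : closedBall (x + ρ • g) ρ ⊆ ball x r := by
    intro y hy
    rw [mem_closedBall, dist_eq_norm] at hy
    rw [mem_ball, dist_eq_norm]
    have h1 : y - x = (y - (x + ρ • g)) + ρ • g := by abel
    have h2 : ‖ρ • g‖ = ρ := by rw [norm_smul, hg1, Real.norm_of_nonneg hρpos.le, mul_one]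
    calc ‖y - x‖ ≤ ‖y - (x + ρ • g)‖ + ‖ρ • g‖ := by rw [h1]; exact norm_add_le _ _
      _ < r := by rw [h2]; linarith
  have hUpos : ∀ y ∈ ball (x + ρ • g) ρ, 0 < Uext y := by
    intro y hy
    have hyr := hballsub (ball_subset_closedBall hy)
    rw [mem_ball, dist_eq_norm] at hy hyr
    set d := y - x with hd
    have h1 : ‖d‖ ^ 2 < 2 * ρ * ⟪g, d⟫ := by
      have h2 : y - (x + ρ • g) = d - ρ • g := by rw [hd]; abel
      rw [h2] at hy
      have h3 : ‖d - ρ • g‖ ^ 2 < ρ ^ 2 := by gcongr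
      rw [norm_sub_sq_real, inner_smul_right, norm_smul, hg1, Real.norm_of_nonneg hρpos.le,
        mul_one, real_inner_comm] at h3
      linarith
    -- Taylor estimate with radius `2‖d‖` or `r`
    have hgd : 0 < (⟪g, d⟫ : ℝ) := by
      by_contra hcon
      push Not at hcon
      nlinarith [sq_nonneg ‖d‖]
    have hd0 : 0 < ‖d‖ := by
      rw [norm_pos_iff]; rintro h
      rw [h] at hgd; simp at hgd
    obtain ⟨s, hs1, hs2, hs3⟩ : ∃ s ≤ r, ‖d‖ < s ∧ s ≤ 2 * ‖d‖ :=
      ⟨min r (2 * ‖d‖), min_le_left _ _, lt_min hyr (by linarith), min_le_right _ _⟩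
    have h4 := hmv s hs1 x (mem_ball_self (by linarith)) y
      (by rw [mem_ball, dist_eq_norm]; exact hs2)
    rw [hxU, sub_zero, ← hd, ← inner_gradient_left, ← hg, Real.norm_eq_abs] at h4
    have h5 := (abs_le.1 h4).1
    have h6 : K * s * ‖d‖ ≤ K * (2 * ‖d‖) * ‖d‖ := by gcongr
    have h7 : K * (2 * ‖d‖) * ‖d‖ = 2 * K * ‖d‖ ^ 2 := by ring
    have h8 : 2 * K * ‖d‖ ^ 2 ≤ 2 * K * (2 * ρ * ⟪g, d⟫) := by gcongr
    have h9 : 2 * K * (2 * ρ * (⟪g, d⟫ : ℝ)) = (K * r) * ⟪g, d⟫ := by rw [hρ]; ring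
    have h10 : (K * r) * (⟪g, d⟫ : ℝ) ≤ 1 / 2 * ⟪g, d⟫ := by gcongr
    linarith
  refine ⟨ρ, hρpos, fun y hy => (hrsub (hballsub hy)).1.2, ?_⟩
  -- a point of the positivity set close to `x`
  obtain ⟨y, hyP, hyx⟩ := Metric.mem_closure_iff.1 hxc ρ hρpos
  have hyP' : 0 < u y := hyP
  have hseg : segment ℝ y (y + ρ • g) ⊆ {x | 0 < u x} := by
    refine (convex_segment _ _).isPreconnected.subset_of_closure_inter_subset S.isOpen
      ⟨y, left_mem_segment _ _ _, hyP⟩ ?_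
    rintro z ⟨hzc, hz⟩
    rw [segment_eq_image'] at hz
    obtain ⟨θ, ⟨hθ0, hθ1⟩, rfl⟩ := hz
    simp only [add_sub_cancel_left] at hzc ⊢
    simp only [mem_ofPred_eq]
    rw [← S.eq _ hzc]
    have hyx' : ‖y - x‖ < ρ := by rw [← dist_eq_norm, dist_comm]; exact hyx
    have hn1 : ‖θ • ρ • g‖ = θ * ρ := by
      rw [norm_smul, norm_smul, hg1, Real.norm_of_nonneg hρpos.le, Real.norm_of_nonneg hθ0, mul_one]
    have hin : y + θ • ρ • g ∈ ball x r := by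
      rw [mem_ball, dist_eq_norm]
      have h1 : y + θ • ρ • g - x = (y - x) + θ • ρ • g := by abel
      rw [h1]
      refine (norm_add_le _ _).trans_lt ?_
      rw [hn1]
      nlinarith
    have hyr : y ∈ ball x r := by rw [mem_ball, dist_eq_norm]; linarith
    have h4 := hmv r le_rfl y hyr _ hin
    rw [add_sub_cancel_left, hn1, ← inner_gradient_left, ← hg, inner_smul_right, inner_smul_right,
      real_inner_self_eq_norm_sq, hg1, S.eq y (subset_closure hyP), Real.norm_eq_abs] at h4
    have h5 := (abs_le.1 h4).1
    have h6 : K * r * (θ * ρ) ≤ 1 / 2 * (θ * ρ) := by gcongr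
    have h7 : 0 ≤ θ * ρ := by positivity
    linarith
  refine (convex_ball _ _).isPreconnected.subset_of_closure_inter_subset S.isOpen
    ⟨y + ρ • g, ?_, hseg (right_mem_segment _ _ _)⟩ ?_
  · rw [mem_ball, dist_add_right, dist_comm]; exact hyx
  · rintro z ⟨hzc, hz⟩
    simp only [mem_ofPred_eq]
    rw [← S.eq z hzc]
    exact hUpos z hz

lemma hopf_at (S : Setup u Uext) (hn : 3 ≤ n)
    (hNotLin : ¬ ∃ ν : EuclideanSpace ℝ (Fin n), ‖ν‖ = 1 ∧ ∀ x, u x = max ⟪x, ν⟫ 0)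
    {x : EuclideanSpace ℝ (Fin n)} (hx : x ∈ freeBoundary u) :
    0 < fderiv ℝ (fun y => fderiv ℝ Uext y (gradient Uext x)) x (-(gradient Uext x)) := by
  have hsm := S.smooth x ⟨hx.1.1, hx.2⟩
  obtain ⟨ρ, hρ, hcb, hb⟩ := S.interior_ball hx (hsm.eventually (by simp))
  set g := gradient Uext x with hg
  have hg1 : ‖g‖ = 1 := S.grad1 x hx
  have h1 := hopf (f := fun y => fderiv ℝ Uext y g) (q := x + ρ • g) (y := x) hρ
    (fun z hz => (ContDiffAt.fderiv_right (m := 2) (n := 3) (show ContDiffAt ℝ 3 Uext z from hcb hz)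
      (by norm_num)).clm_apply
      contDiffAt_const)
    (fun z hz => lap_fderiv_apply S.isOpen (fun z hz => S.smooth' hz) S.harm g z (hb hz))
    (fun z hz => by
      simp only [← inner_gradient_left]
      rw [← hg, real_inner_self_eq_norm_sq, hg1]
      have h2 := real_inner_le_norm (gradient Uext z) g
      have h3 := S.gradient_lt hn hNotLin (hb hz)
      rw [hg1] at h2
      linarith)
    (by simp [norm_smul, hg1, hρ.le])
  have h2 : x - (x + ρ • g) = ρ • (-g) := by simp
  rw [h2, map_smul, smul_eq_mul] at h1
  exact pos_of_mul_pos_right h1 hρ.le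

end Setup

lemma deriv_gradient_sq {Uext : EuclideanSpace ℝ (Fin n) → ℝ} {x : EuclideanSpace ℝ (Fin n)}
    (hsm : ContDiffAt ℝ 3 Uext x) (v : EuclideanSpace ℝ (Fin n)) :
    deriv (fun t : ℝ => ‖gradient Uext (x + t • v)‖ ^ 2 / 2) 0
      = fderiv ℝ (fun y => fderiv ℝ Uext y (gradient Uext x)) x v := by
  let T : StrongDual ℝ (EuclideanSpace ℝ (Fin n)) →L[ℝ] EuclideanSpace ℝ (Fin n) :=
    { toFun := (InnerProductSpace.toDual ℝ (EuclideanSpace ℝ (Fin n))).symm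
      map_add' := fun a b => map_add _ a b
      map_smul' := fun c a => by simp
      cont := (InnerProductSpace.toDual ℝ (EuclideanSpace ℝ (Fin n))).symm.continuous }
  have h1 : HasFDerivAt (fderiv ℝ Uext) (fderiv ℝ (fderiv ℝ Uext) x) x :=
    ((hsm.fderiv_right (m := 1) (by norm_num)).differentiableAt (by simp)).hasFDerivAt
  have hG : HasFDerivAt (gradient Uext) (T.comp (fderiv ℝ (fderiv ℝ Uext) x)) x :=
    T.hasFDerivAt.comp x h1
  set L := T.comp (fderiv ℝ (fderiv ℝ Uext) x) with hL
  have hline : HasDerivAt (fun t : ℝ => x + t • v) v 0 := by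
    simpa using ((hasDerivAt_id (0 : ℝ)).smul_const v).const_add x
  have hG0 : HasFDerivAt (gradient Uext) L (x + (0 : ℝ) • v) := by simpa using hG
  have hGl : HasDerivAt (fun t : ℝ => gradient Uext (x + t • v)) (L v) 0 :=
    HasFDerivAt.comp_hasDerivAt (l := gradient Uext) (0 : ℝ) hG0 hline
  have h2 := (hGl.norm_sq.div_const 2).deriv
  have h3 : HasFDerivAt (fun y => fderiv ℝ Uext y (gradient Uext x))
      ((innerSL ℝ (gradient Uext x)).comp L) x := by
    have h4 := ((innerSL ℝ (gradient Uext x)).hasFDerivAt (x := gradient Uext x)).comp x hG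
    refine h4.congr_of_eventuallyEq (Filter.Eventually.of_forall fun y => ?_)
    simp only [Function.comp, innerSL_apply_apply]
    rw [real_inner_comm, inner_gradient_left]
  rw [h3.fderiv]
  refine h2.trans ?_
  simp

end helpers

/-- **Positivity of the mean curvature for nonlinear homogeneous minimizers**
(from the proof of Theorem 1.2, following [CJK04, JS15]).  If `u` is a `1`-homogeneous
`Γ`-symmetric minimizer against `Γ`-symmetric competitors, harmonic in `{u>0}`, with
`Σ = ∂{u>0} \ {0}` a smooth embedded hypersurface (encoded via a smooth extension `Uext`),
`|∇u| = 1` on `Σ`, and `u` is not a linear solution, then everywhere on `Σ`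
`0 < ∂_ν(|∇u|²/2) = -∂²u/∂ν² = H`. -/
theorem mean_curvature_positive_of_nonlinear {n : ℕ} (hn : 3 ≤ n)
    (Γ : Subgroup (EuclideanSpace ℝ (Fin n) ≃ₗᵢ[ℝ] EuclideanSpace ℝ (Fin n)))
    (hfin : Finite Γ)
    (hfree : ∀ g ∈ Γ, (∃ x : EuclideanSpace ℝ (Fin n), x ≠ 0 ∧ g x = x) → g = 1)
    (u : EuclideanSpace ℝ (Fin n) → ℝ)
    (hmin : IsSymMinimizer Γ u)
    (huHom : ∀ t : ℝ, 0 < t → ∀ x, u (t • x) = t * u x)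
    (huHarm : ∀ x ∈ {x | 0 < u x}, lap u x = 0)
    -- smooth extension of `u` across `Σ`
    (Uext : EuclideanSpace ℝ (Fin n) → ℝ) (W : Set (EuclideanSpace ℝ (Fin n)))
    (hW : IsOpen W) (hWsup : closure {x | 0 < u x} \ {0} ⊆ W)
    (hUsm : ContDiffOn ℝ (⊤ : ℕ∞) Uext W)
    (hUeq : ∀ x ∈ closure {x | 0 < u x}, Uext x = u x)
    (hgrad1 : ∀ x ∈ freeBoundary u, ‖gradient Uext x‖ = 1)
    (hsurf : ∀ x ∈ freeBoundary u, ∃ ε > 0,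
      freeBoundary u ∩ ball x ε = {y ∈ ball x ε | Uext y = 0})
    -- `u` is not a linear solution
    (hNotLin : ¬ ∃ ν : EuclideanSpace ℝ (Fin n), ‖ν‖ = 1 ∧ ∀ x, u x = max ⟪x, ν⟫ 0) :
    ∀ x ∈ freeBoundary u,
      0 < deriv (fun t : ℝ => ‖gradient Uext (x + t • nuVec Uext x)‖ ^ 2 / 2) 0 ∧
      deriv (fun t : ℝ => ‖gradient Uext (x + t • nuVec Uext x)‖ ^ 2 / 2) 0
        = meanCurv Uext x ∧
      0 < meanCurv Uext x := by
  have hC : ∀ x ∈ W, ContDiffAt ℝ 3 Uext x := fun x hx =>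
    ((hUsm x hx).contDiffAt (hW.mem_nhds hx)).of_le (by
      have h3 : ((3 : ℕ∞) : WithTop ℕ∞) ≤ ((⊤ : ℕ∞) : WithTop ℕ∞) := WithTop.coe_le_coe.2 le_top
      exact h3)
  have hPo : IsOpen {x | 0 < u x} := isOpen_lt continuous_const hmin.2.1.continuous
  have S : Setup u Uext :=
    { nonneg := hmin.1
      cont := hmin.2.1.continuous
      hom := huHom
      harm := by
        intro x hx
        rw [← huHarm x hx]
        have h1 : Uext =ᶠ[nhds x] u := by
          filter_upwards [hPo.mem_nhds hx] with z hz using hUeq z (subset_closure hz)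
        unfold lap
        refine Finset.sum_congr rfl fun i _ => ?_
        have h2 : (fun y => fderiv ℝ Uext y (EuclideanSpace.single i 1))
            =ᶠ[nhds x] fun y => fderiv ℝ u y (EuclideanSpace.single i 1) := by
          filter_upwards [h1.fderiv (𝕜 := ℝ)] with y hy
          rw [hy]
        rw [h2.fderiv_eq]
      smooth := fun x hx => hC x (hWsup hx)
      eq := hUeq
      grad1 := hgrad1 }
  intro x hx
  have hpos := S.hopf_at hn hNotLin hx
  have hder := deriv_gradient_sq (S.smooth x ⟨hx.1.1, hx.2⟩) (nuVec Uext x)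
  have hmc : meanCurv Uext x
      = fderiv ℝ (fun y => fderiv ℝ Uext y (gradient Uext x)) x (-(gradient Uext x)) := by
    unfold meanCurv nuVec
    have h1 : (fun y => (⟪gradient Uext y, -(gradient Uext x)⟫ : ℝ))
        = fun y => -(fderiv ℝ Uext y (gradient Uext x)) := by
      funext y
      rw [inner_neg_right, inner_gradient_left]
    rw [h1, fderiv_fun_neg]
    simp
  rw [hder, hmc]
  exact ⟨hpos, rfl, hpos⟩
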